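/- For every n ≥ 2 and every braid α ∈ UVB_n, there exists a pure braid β ∈ UVP_m, where m is the number of orbits of the permutation ι(α) acting on {1,…,n} (with UVP_1 interpreted as the trivial group), such that α and β are fused Markov equivalent. (Equivalently: every unrestricted virtual braid whose closure has m components is fused Markov equivalent to a pure unrestricted virtual braid on m strands.) -/

import Mathlib

/-!  Common setup: the unrestricted virtual braid group `UVB n`, its generators
σ_k, ρ_k (1-based indices), the elements λ_{i,j} and B_{i,j}, the permutation
homomorphism ι (characterized by `IsIota`), the section s : S_n → UVB n
(characterized by `IsPermSection`), and fused Markov equivalence. -/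

/-- Generators of the unrestricted virtual braid group `UVB n`:
`Sum.inl i` is the classical generator σ_{i+1} and `Sum.inr i` is the virtual
generator ρ_{i+1}, for `i : Fin (n-1)` (so the 1-based indices are `1, …, n-1`). -/
abbrev UVBGen (n : ℕ) := Sum (Fin (n - 1)) (Fin (n - 1))

namespace UVBGen
def sg {n : ℕ} (i : Fin (n - 1)) : FreeGroup (UVBGen n) := FreeGroup.of (Sum.inl i)
def rg {n : ℕ} (i : Fin (n - 1)) : FreeGroup (UVBGen n) := FreeGroup.of (Sum.inr i)
end UVBGen

open UVBGen in
/-- The defining relations of the unrestricted virtual braid group. -/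
def uvbRels (n : ℕ) : Set (FreeGroup (UVBGen n)) :=
  {r | (∃ i j : Fin (n - 1), (j : ℕ) = (i : ℕ) + 1 ∧
          (r = sg i * sg j * sg i * (sg j * sg i * sg j)⁻¹ ∨
           r = rg i * rg j * rg i * (rg j * rg i * rg j)⁻¹ ∨
           r = rg i * rg j * sg i * (sg j * rg i * rg j)⁻¹ ∨
           r = rg i * sg j * sg i * (sg j * sg i * rg j)⁻¹ ∨
           r = rg j * sg i * sg j * (sg i * sg j * rg i)⁻¹)) ∨
       (∃ i j : Fin (n - 1), ((i : ℕ) + 2 ≤ (j : ℕ) ∨ (j : ℕ) + 2 ≤ (i : ℕ)) ∧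
          (r = sg i * sg j * (sg j * sg i)⁻¹ ∨
           r = rg i * rg j * (rg j * rg i)⁻¹ ∨
           r = sg i * rg j * (rg j * sg i)⁻¹)) ∨
       (∃ i : Fin (n - 1), r = rg i * rg i)}

/-- The unrestricted virtual braid group on `n` strands. -/
abbrev UVB (n : ℕ) := PresentedGroup (uvbRels n)

namespace UVB

/-- The generator σ_k (1-based index; meaningful for `1 ≤ k ≤ n-1`, junk value `1` otherwise). -/
def sigma (n k : ℕ) : UVB n :=
  if h : 1 ≤ k ∧ k ≤ n - 1 then PresentedGroup.of (Sum.inl ⟨k - 1, by omega⟩) else 1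

/-- The generator ρ_k (1-based index; meaningful for `1 ≤ k ≤ n-1`, junk value `1` otherwise). -/
def rho (n k : ℕ) : UVB n :=
  if h : 1 ≤ k ∧ k ≤ n - 1 then PresentedGroup.of (Sum.inr ⟨k - 1, by omega⟩) else 1

/-- The element λ_{i,j} of `UVB n` (1-based indices `1 ≤ i ≠ j ≤ n`; junk value `1` if `i = j`).
For `i < j`:  `λ_{i,j} = ρ_{j-1}⋯ρ_{i+1} · ρ_i σ_i⁻¹ · ρ_{i+1}⋯ρ_{j-1}` and
`λ_{j,i} = ρ_{j-1}⋯ρ_{i+1} · σ_i⁻¹ ρ_i · ρ_{i+1}⋯ρ_{j-1}`. -/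
def lam (n i j : ℕ) : UVB n :=
  if i < j then
    (((List.range' (i + 1) (j - 1 - i)).reverse.map (rho n)).prod) *
      (rho n i * (sigma n i)⁻¹) *
      (((List.range' (i + 1) (j - 1 - i)).map (rho n)).prod)
  else if j < i then
    (((List.range' (j + 1) (i - 1 - j)).reverse.map (rho n)).prod) *
      ((sigma n j)⁻¹ * rho n j) *
      (((List.range' (j + 1) (i - 1 - j)).map (rho n)).prod)
  else 1

/-- The element `B_{i,j} = ρ_{j-1}ρ_{j-2}⋯ρ_{i+1}ρ_i` for `i < j`, and `1` otherwise. -/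
def B (n i j : ℕ) : UVB n :=
  if i < j then ((List.range' i (j - i)).reverse.map (rho n)).prod else 1

/-- The subgroup `U_j` of `UVB n` generated by `{λ_{i,j}, λ_{j,i} : 1 ≤ i < j}`. -/
def U (n j : ℕ) : Subgroup (UVB n) :=
  Subgroup.closure {x | ∃ i, 1 ≤ i ∧ i < j ∧ (x = lam n i j ∨ x = lam n j i)}

end UVB

/-- `ι : UVB n →* S_n` is the homomorphism sending σ_k and ρ_k to the
transposition (k, k+1) (written 0-based on `Fin n`). -/
def IsIota (n : ℕ) (ι : UVB n →* Equiv.Perm (Fin n)) : Prop :=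
  ∀ (k : ℕ) (h1 : 1 ≤ k) (h2 : k ≤ n - 1),
    ι (UVB.sigma n k) = Equiv.swap ⟨k - 1, by omega⟩ ⟨k, by omega⟩ ∧
    ι (UVB.rho n k) = Equiv.swap ⟨k - 1, by omega⟩ ⟨k, by omega⟩

/-- `s : S_n →* UVB n` is the homomorphism sending the transposition (k, k+1) to ρ_k. -/
def IsPermSection (n : ℕ) (s : Equiv.Perm (Fin n) →* UVB n) : Prop :=
  ∀ (k : ℕ) (h1 : 1 ≤ k) (h2 : k ≤ n - 1),
    s (Equiv.swap ⟨k - 1, by omega⟩ ⟨k, by omega⟩) = UVB.rho n k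

/-- The number of orbits of a permutation of `Fin n`
(= number of fixed points + number of nontrivial cycles). -/
def numOrbits {n : ℕ} (π : Equiv.Perm (Fin n)) : ℕ :=
  (Finset.univ.filter fun x => π x = x).card + π.cycleType.card

namespace UVB

private def embedGen (n : ℕ) : UVBGen n → UVBGen (n + 1)
  | Sum.inl i => Sum.inl ⟨i.val, by have := i.isLt; omega⟩
  | Sum.inr i => Sum.inr ⟨i.val, by have := i.isLt; omega⟩

open UVBGen in
/-- The natural inclusion `UVB n →* UVB (n+1)` (σ_k ↦ σ_k, ρ_k ↦ ρ_k). -/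
def incl (n : ℕ) : UVB n →* UVB (n + 1) :=
  PresentedGroup.toGroup (f := fun x => PresentedGroup.of (embedGen n x)) (by
    have key : (FreeGroup.lift fun x => (PresentedGroup.of (embedGen n x) : UVB (n + 1)))
        = (PresentedGroup.mk (uvbRels (n + 1))).comp (FreeGroup.map (embedGen n)) := by
      ext x
      simp [PresentedGroup.of]
    intro r hr
    rw [key]
    simp only [MonoidHom.comp_apply]
    have hmem : FreeGroup.map (embedGen n) r ∈ uvbRels (n + 1) := by
      have hsg : ∀ i : Fin (n - 1), FreeGroup.map (embedGen n) (sg i)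
          = sg (⟨i.val, by have := i.isLt; omega⟩ : Fin (n + 1 - 1)) := by
        intro i; simp [sg, embedGen]
      have hrg : ∀ i : Fin (n - 1), FreeGroup.map (embedGen n) (rg i)
          = rg (⟨i.val, by have := i.isLt; omega⟩ : Fin (n + 1 - 1)) := by
        intro i; simp [rg, embedGen]
      rcases hr with ⟨i, j, hij, hc⟩ | ⟨i, j, hij, hc⟩ | ⟨i, hc⟩
      · refine Or.inl ⟨⟨i.val, by have := i.isLt; omega⟩, ⟨j.val, by have := j.isLt; omega⟩,
          by simpa using hij, ?_⟩
        rcases hc with h | h | h | h | h <;> subst h <;>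
          simp only [map_mul, map_inv, hsg, hrg] <;> tauto
      · refine Or.inr (Or.inl ⟨⟨i.val, by have := i.isLt; omega⟩, ⟨j.val, by have := j.isLt; omega⟩,
          by simpa using hij, ?_⟩)
        rcases hc with h | h | h <;> subst h <;>
          simp only [map_mul, map_inv, hsg, hrg] <;> tauto
      · refine Or.inr (Or.inr ⟨⟨i.val, by have := i.isLt; omega⟩, ?_⟩)
        subst hc
        simp only [map_mul, hsg, hrg]
    exact (QuotientGroup.eq_one_iff _).mpr (Subgroup.subset_normalClosure hmem))

end UVB

/-- The elementary fused Markov moves on the disjoint union of the groups `UVB n`: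
conjugation, and the three right stabilizations (positive, negative, virtual). -/
inductive MarkovBase : (Σ n, UVB n) → (Σ n, UVB n) → Prop
  | conj (n : ℕ) (α γ : UVB n) : MarkovBase ⟨n, α⟩ ⟨n, γ * α * γ⁻¹⟩
  | stabPos (n : ℕ) (α : UVB n) :
      MarkovBase ⟨n, α⟩ ⟨n + 1, UVB.incl n α * UVB.sigma (n + 1) n⟩
  | stabNeg (n : ℕ) (α : UVB n) :
      MarkovBase ⟨n, α⟩ ⟨n + 1, UVB.incl n α * (UVB.sigma (n + 1) n)⁻¹⟩
  | stabVirt (n : ℕ) (α : UVB n) :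
      MarkovBase ⟨n, α⟩ ⟨n + 1, UVB.incl n α * UVB.rho (n + 1) n⟩

/-- Fused Markov equivalence: the smallest equivalence relation generated by the
elementary Markov moves.  By Kamada's theorem, two unrestricted virtual braids are
fused Markov equivalent iff their closures are equivalent fused links. -/
def Markov : (Σ n, UVB n) → (Σ n, UVB n) → Prop := Relation.EqvGen MarkovBase

/-!
Pure generators of different pairs of strands commute, and virtual braids permute the pure
generators as they permute the strands, so every braid is `p * v` with `p` pure and `v` virtual.
If the permutation is not trivial, conjugate so that it sends some strand `b` to the last strand.
Conjugation then pushes every pure generator of the last strand back along the permutation, to a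
pair containing `b`. If this is the pair of `b` and the last strand, the generator is pushed back
once more, unless the permutation exchanges these two strands. In that case it is removed by a
virtual stabilization, followed by a conjugation and a classical destabilization. Now `p` avoids
the last strand and the braid is a virtual stabilization of a braid on one strand fewer. This
repeats until the permutation is trivial; the number of strands is then the number of orbits, which
Markov moves preserve.
-/

namespace UVB

open Equiv UVBGen

variable {n k l : ℕ}

/-! ### The defining relations -/

lemma sigma_of_not (h : ¬(1 ≤ k ∧ k ≤ n - 1)) : sigma n k = 1 := dif_neg h

lemma rho_of_not (h : ¬(1 ≤ k ∧ k ≤ n - 1)) : rho n k = 1 := dif_neg h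

lemma mk_sg (i : Fin (n - 1)) : PresentedGroup.mk (uvbRels n) (sg i) = sigma n (i + 1) := by
  rw [sigma, dif_pos (by omega)]
  rfl

lemma mk_rg (i : Fin (n - 1)) : PresentedGroup.mk (uvbRels n) (rg i) = rho n (i + 1) := by
  rw [rho, dif_pos (by omega)]
  rfl

lemma closure_generators :
    Subgroup.closure (sigma n '' Set.Iio n ∪ rho n '' Set.Iio n) = ⊤ := by
  rw [eq_top_iff, ← PresentedGroup.closure_range_of, Subgroup.closure_le]
  rintro _ ⟨i | i, rfl⟩ <;> apply Subgroup.subset_closure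
  · exact .inl ⟨i + 1, by simp only [Set.mem_Iio]; omega, (mk_sg i).symm⟩
  · exact .inr ⟨i + 1, by simp only [Set.mem_Iio]; omega, (mk_rg i).symm⟩

section Relations

variable (h : k + 2 < n)
include h

lemma sigma_braid : sigma n (k + 1) * sigma n (k + 2) * sigma n (k + 1) =
    sigma n (k + 2) * sigma n (k + 1) * sigma n (k + 2) := by
  simpa only [map_mul, mk_sg] using PresentedGroup.mk_eq_mk_of_mul_inv_mem (rels := uvbRels n)
    (.inl ⟨⟨k, by omega⟩, ⟨k + 1, by omega⟩, rfl, .inl rfl⟩)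

lemma rho_braid : rho n (k + 1) * rho n (k + 2) * rho n (k + 1) =
    rho n (k + 2) * rho n (k + 1) * rho n (k + 2) := by
  simpa only [map_mul, mk_rg] using PresentedGroup.mk_eq_mk_of_mul_inv_mem (rels := uvbRels n)
    (.inl ⟨⟨k, by omega⟩, ⟨k + 1, by omega⟩, rfl, .inr (.inl rfl)⟩)

lemma rho_rho_sigma : rho n (k + 1) * rho n (k + 2) * sigma n (k + 1) =
    sigma n (k + 2) * rho n (k + 1) * rho n (k + 2) := by
  simpa only [map_mul, mk_sg, mk_rg] using
    PresentedGroup.mk_eq_mk_of_mul_inv_mem (rels := uvbRels n)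
      (.inl ⟨⟨k, by omega⟩, ⟨k + 1, by omega⟩, rfl, .inr (.inr (.inl rfl))⟩)

lemma rho_sigma_sigma : rho n (k + 1) * sigma n (k + 2) * sigma n (k + 1) =
    sigma n (k + 2) * sigma n (k + 1) * rho n (k + 2) := by
  simpa only [map_mul, mk_sg, mk_rg] using
    PresentedGroup.mk_eq_mk_of_mul_inv_mem (rels := uvbRels n)
      (.inl ⟨⟨k, by omega⟩, ⟨k + 1, by omega⟩, rfl, .inr (.inr (.inr (.inl rfl)))⟩)

lemma rho_sigma_sigma' : rho n (k + 2) * sigma n (k + 1) * sigma n (k + 2) =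
    sigma n (k + 1) * sigma n (k + 2) * rho n (k + 1) := by
  simpa only [map_mul, mk_sg, mk_rg] using
    PresentedGroup.mk_eq_mk_of_mul_inv_mem (rels := uvbRels n)
      (.inl ⟨⟨k, by omega⟩, ⟨k + 1, by omega⟩, rfl, .inr (.inr (.inr (.inr rfl)))⟩)

end Relations

section FarCommutation

variable (n) (h : k + 2 ≤ l ∨ l + 2 ≤ k)
include h

lemma commute_of_far {a b : ℕ → UVB n} (ha : ∀ k, ¬(1 ≤ k ∧ k ≤ n - 1) → a k = 1)
    (hb : ∀ k, ¬(1 ≤ k ∧ k ≤ n - 1) → b k = 1)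
    (hab : ∀ i j : Fin (n - 1), (i : ℕ) + 2 ≤ j ∨ (j : ℕ) + 2 ≤ i →
      Commute (a (i + 1)) (b (j + 1))) : Commute (a k) (b l) := by
  by_cases hk : 1 ≤ k ∧ k ≤ n - 1
  · by_cases hl : 1 ≤ l ∧ l ≤ n - 1
    · simpa only [Nat.sub_add_cancel hk.1, Nat.sub_add_cancel hl.1] using
        hab ⟨k - 1, by omega⟩ ⟨l - 1, by omega⟩ (by simp only; omega)
    · exact hb l hl ▸ .one_right _
  · exact ha k hk ▸ .one_left _

lemma commute_sigma_sigma : Commute (sigma n k) (sigma n l) :=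
  commute_of_far n h (fun _ => sigma_of_not) (fun _ => sigma_of_not) fun i j hij => by
    simpa only [map_mul, Commute, SemiconjBy, mk_sg] using
      PresentedGroup.mk_eq_mk_of_mul_inv_mem (rels := uvbRels n)
        (.inr (.inl ⟨i, j, hij, .inl rfl⟩))

lemma commute_rho_rho : Commute (rho n k) (rho n l) :=
  commute_of_far n h (fun _ => rho_of_not) (fun _ => rho_of_not) fun i j hij => by
    simpa only [map_mul, Commute, SemiconjBy, mk_rg] using
      PresentedGroup.mk_eq_mk_of_mul_inv_mem (rels := uvbRels n)
        (.inr (.inl ⟨i, j, hij, .inr (.inl rfl)⟩))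

lemma commute_sigma_rho : Commute (sigma n k) (rho n l) :=
  commute_of_far n h (fun _ => sigma_of_not) (fun _ => rho_of_not) fun i j hij => by
    simpa only [map_mul, Commute, SemiconjBy, mk_sg, mk_rg] using
      PresentedGroup.mk_eq_mk_of_mul_inv_mem (rels := uvbRels n)
        (.inr (.inl ⟨i, j, hij, .inr (.inr rfl)⟩))

end FarCommutation

@[simp]
lemma rho_mul_self (n k : ℕ) : rho n k * rho n k = 1 := by
  by_cases h : 1 ≤ k ∧ k ≤ n - 1
  · simpa only [map_mul, mk_rg, Nat.sub_add_cancel h.1] using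
      PresentedGroup.one_of_mem (rels := uvbRels n) (.inr (.inr ⟨⟨k - 1, by omega⟩, rfl⟩))
  · rw [rho_of_not h, mul_one]

@[simp]
lemma rho_inv (n k : ℕ) : (rho n k)⁻¹ = rho n k :=
  inv_eq_of_mul_eq_one_right (rho_mul_self n k)

/-! ### The permutation of a braid -/

lemma swap_braid {α : Type*} [DecidableEq α] {x y z : α} (hxy : x ≠ y) (hyz : y ≠ z)
    (hxz : x ≠ z) : swap x y * swap y z * swap x y = swap y z * swap x y * swap y z := by
  rw [swap_mul_swap_mul_swap hxy hxz, swap_comm x y, swap_comm y z,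
    swap_mul_swap_mul_swap hyz.symm hxz.symm, swap_comm]

/-- The adjacent transposition `(i, i + 1)`, indexed like the generators of `UVB n`. -/
def adjSwap (i : Fin (n - 1)) : Perm (Fin n) := swap ⟨i, by omega⟩ ⟨i + 1, by omega⟩

lemma adjSwap_braid {i j : Fin (n - 1)} (hij : (j : ℕ) = i + 1) :
    adjSwap i * adjSwap j * adjSwap i = adjSwap j * adjSwap i * adjSwap j := by
  simp only [adjSwap, hij]
  exact swap_braid (by simp) (by simp) (Fin.ne_of_val_ne (by dsimp only; omega))

lemma adjSwap_comm {i j : Fin (n - 1)} (hij : (i : ℕ) + 2 ≤ j ∨ (j : ℕ) + 2 ≤ i) :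
    adjSwap i * adjSwap j = adjSwap j * adjSwap i := by
  refine (Perm.disjoint_swap_swap ?_).commute
  simp only [List.nodup_cons, List.mem_cons, Fin.mk.injEq, List.not_mem_nil, or_false,
    not_false_eq_true, List.nodup_nil, and_true]
  omega

/-- The permutation of a braid: the homomorphism `ι : UVB n → S_n`. -/
def permHom : UVB n →* Perm (Fin n) :=
  PresentedGroup.toGroup (rels := uvbRels n) (f := Sum.elim adjSwap adjSwap) <| by
    rintro _ (⟨i, j, hij, rfl | rfl | rfl | rfl | rfl⟩ | ⟨i, j, hij, rfl | rfl | rfl⟩ | ⟨i, rfl⟩)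
    all_goals simp only [map_mul, map_inv, sg, rg, FreeGroup.lift_apply_of, Sum.elim_inl,
      Sum.elim_inr, mul_inv_eq_one]
    iterate 4 exact adjSwap_braid hij
    · exact (adjSwap_braid hij).symm
    iterate 3 exact adjSwap_comm hij
    · exact swap_mul_self _ _

lemma permHom_sigma {x y : Fin n} (h : (x : ℕ) + 1 = y) : permHom (sigma n y) = swap x y := by
  rw [show sigma n y = _ from h ▸ (mk_sg ⟨x, by omega⟩).symm]
  refine (PresentedGroup.toGroup.of _).trans ?_
  simp [adjSwap, h]

lemma permHom_rho {x y : Fin n} (h : (x : ℕ) + 1 = y) : permHom (rho n y) = swap x y := by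
  rw [show rho n y = _ from h ▸ (mk_rg ⟨x, by omega⟩).symm]
  refine (PresentedGroup.toGroup.of _).trans ?_
  simp [adjSwap, h]

lemma hom_ext {G : Type*} [Monoid G] {f g : UVB n →* G}
    (sigma : ∀ k, k + 1 < n → f (sigma n (k + 1)) = g (sigma n (k + 1)))
    (rho : ∀ k, k + 1 < n → f (rho n (k + 1)) = g (rho n (k + 1))) : f = g := by
  refine MonoidHom.eq_of_eqOn_dense closure_generators ?_
  rintro _ (⟨_ | k, hk, rfl⟩ | ⟨_ | k, hk, rfl⟩)
  · simp only [sigma_of_not (n := n) (k := 0) (by omega), map_one]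
  · exact sigma k hk
  · simp only [rho_of_not (n := n) (k := 0) (by omega), map_one]
  · exact rho k hk

lemma permHom_sigma_eq_permHom_rho (n k : ℕ) : permHom (sigma n k) = permHom (rho n k) := by
  by_cases h : 1 ≤ k ∧ k ≤ n - 1
  · have hk : k - 1 + 1 = k := by omega
    exact (permHom_sigma (x := ⟨k - 1, by omega⟩) (y := ⟨k, by omega⟩) hk).trans
      (permHom_rho (x := ⟨k - 1, by omega⟩) (y := ⟨k, by omega⟩) hk).symm
  · rw [sigma_of_not h, rho_of_not h]

lemma _root_.IsIota.eq_permHom {ι : UVB n →* Perm (Fin n)} (hι : IsIota n ι) : ι = permHom :=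
  hom_ext
    (fun k hk => (hι (k + 1) (by omega) (by omega)).1.trans
      (permHom_sigma (x := ⟨k, by omega⟩) (y := ⟨k + 1, hk⟩) rfl).symm)
    (fun k hk => (hι (k + 1) (by omega) (by omega)).2.trans
      (permHom_rho (x := ⟨k, by omega⟩) (y := ⟨k + 1, hk⟩) rfl).symm)

/-! ### The inclusion `UVB n → UVB (n + 1)` -/

lemma incl_sigma (h : k < n) : incl n (sigma n k) = sigma (n + 1) k := by
  obtain _ | k := k
  · rw [sigma_of_not (by omega), sigma_of_not (by omega), map_one]
  · rw [← mk_sg ⟨k, by omega⟩, ← mk_sg ⟨k, by omega⟩]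
    exact PresentedGroup.toGroup.of _

lemma incl_rho (h : k < n) : incl n (rho n k) = rho (n + 1) k := by
  obtain _ | k := k
  · rw [rho_of_not (by omega), rho_of_not (by omega), map_one]
  · rw [← mk_rg ⟨k, by omega⟩, ← mk_rg ⟨k, by omega⟩]
    exact PresentedGroup.toGroup.of _

lemma viaEmbeddingHom_swap {α β : Type*} [DecidableEq α] [DecidableEq β] (f : α ↪ β) (x y : α) :
    Perm.viaEmbeddingHom f (swap x y) = swap (f x) (f y) := by
  ext z
  by_cases hz : z ∈ Set.range f
  · obtain ⟨z, rfl⟩ := hz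
    rw [Perm.viaEmbeddingHom_apply, Perm.viaEmbedding_apply, f.swap_apply]
  · rw [Perm.viaEmbeddingHom_apply, Perm.viaEmbedding_apply_of_notMem _ _ _ hz,
      swap_apply_of_ne_of_ne]
    · exact fun h => hz ⟨x, h.symm⟩
    · exact fun h => hz ⟨y, h.symm⟩

lemma permHom_incl (α : UVB n) :
    permHom (incl n α) = Perm.viaEmbeddingHom Fin.castSuccEmb (permHom α) := by
  suffices permHom.comp (incl n) = (Perm.viaEmbeddingHom Fin.castSuccEmb).comp permHom from
    DFunLike.congr_fun this α
  refine hom_ext (fun k hk => ?_) fun k hk => ?_ <;> let x : Fin n := ⟨k, by omega⟩ <;>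
    let y : Fin n := ⟨k + 1, hk⟩
  · rw [MonoidHom.comp_apply, MonoidHom.comp_apply, incl_sigma hk,
      permHom_sigma (x := x) (y := y) rfl, viaEmbeddingHom_swap]
    exact permHom_sigma (x := x.castSucc) (y := y.castSucc) rfl
  · rw [MonoidHom.comp_apply, MonoidHom.comp_apply, incl_rho hk,
      permHom_rho (x := x) (y := y) rfl, viaEmbeddingHom_swap]
    exact permHom_rho (x := x.castSucc) (y := y.castSucc) rfl

@[simp]
lemma permHom_incl_castSucc (α : UVB n) (x : Fin n) :
    permHom (incl n α) x.castSucc = (permHom α x).castSucc := by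
  rw [permHom_incl]
  exact Perm.viaEmbedding_apply _ Fin.castSuccEmb x

@[simp]
lemma permHom_incl_last (α : UVB n) : permHom (incl n α) (Fin.last n) = Fin.last n := by
  rw [permHom_incl]
  refine Perm.viaEmbedding_apply_of_notMem _ Fin.castSuccEmb _ ?_
  rintro ⟨x, hx⟩
  exact x.castSucc_lt_last.ne hx

/-! ### Virtual braids -/

open DoubleCoset in
lemma mem_or_mem_doubleCoset {G : Type*} [Group G] {H : Subgroup G} {r : G} (hr : r * r = 1)
    (hH : ∀ b ∈ H, r * b * r ∈ (H : Set G) ∪ doubleCoset r H H) {x : G}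
    (hx : x ∈ H ⊔ Subgroup.closure {r}) : x ∈ (H : Set G) ∪ doubleCoset r H H := by
  have mul_mem_of_mem {x y : G} (hx : x ∈ (H : Set G) ∪ doubleCoset r H H) (hy : y ∈ H) :
      x * y ∈ (H : Set G) ∪ doubleCoset r H H := by
    obtain hx | hx := hx
    · exact .inl (H.mul_mem hx hy)
    · obtain ⟨a, ha, b, hb, rfl⟩ := mem_doubleCoset.1 hx
      exact .inr (mem_doubleCoset.2 ⟨a, ha, b * y, H.mul_mem hb hy, by simp only [mul_assoc]⟩)
  have mul_mem_of_mem_left {x y : G} (hx : x ∈ H) (hy : y ∈ (H : Set G) ∪ doubleCoset r H H) :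
      x * y ∈ (H : Set G) ∪ doubleCoset r H H := by
    obtain hy | hy := hy
    · exact .inl (H.mul_mem hx hy)
    · obtain ⟨a, ha, b, hb, rfl⟩ := mem_doubleCoset.1 hy
      exact .inr (mem_doubleCoset.2 ⟨x * a, H.mul_mem hx ha, b, hb, by simp only [mul_assoc]⟩)
  have mul_r_mem {x : G} (hx : x ∈ (H : Set G) ∪ doubleCoset r H H) :
      x * r ∈ (H : Set G) ∪ doubleCoset r H H := by
    obtain hx | hx := hx
    · exact .inr (mem_doubleCoset.2 ⟨x, hx, 1, H.one_mem, (mul_one _).symm⟩)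
    · obtain ⟨a, ha, b, hb, rfl⟩ := mem_doubleCoset.1 hx
      simpa only [mul_assoc] using mul_mem_of_mem_left ha (hH b hb)
  rw [← H.closure_eq, ← Subgroup.closure_union] at hx
  induction hx using Subgroup.closure_induction_right with
  | one => exact .inl H.one_mem
  | mul_right x _ y hy hx =>
    obtain hy | rfl := hy
    · exact mul_mem_of_mem hx hy
    · exact mul_r_mem hx
  | mul_inv_cancel x _ y hy hx =>
    obtain hy | rfl := hy
    · exact mul_mem_of_mem hx (H.inv_mem hy)
    · exact (inv_eq_of_mul_eq_one_right hr).symm ▸ mul_r_mem hx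

/-- The parabolic subgroup `⟨ρ_1, …, ρ_{k-1}⟩` of virtual braids permuting the first `k` strands;
`virt n n` is the image of the section `S_n → UVB n`. -/
def virt (n k : ℕ) : Subgroup (UVB n) := Subgroup.closure (rho n '' Set.Iio k)

lemma rho_mem_virt (h : k < l) : rho n k ∈ virt n l :=
  Subgroup.subset_closure ⟨k, h, rfl⟩

lemma virt_mono (h : k ≤ l) : virt n k ≤ virt n l :=
  Subgroup.closure_mono (Set.image_mono (Set.Iio_subset_Iio h))

lemma virt_succ (n k : ℕ) : virt n (k + 1) = virt n k ⊔ Subgroup.closure {rho n k} := by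
  rw [virt, virt, ← Subgroup.closure_union, ← Set.image_singleton, ← Set.image_union,
    ← Order.succ_eq_add_one, Order.Iio_succ_eq_insert, Set.union_singleton]

lemma virt_one (n : ℕ) : virt n 1 = ⊥ := by
  rw [virt, Subgroup.closure_eq_bot_iff]
  rintro _ ⟨j, hj, rfl⟩
  exact rho_of_not (by rw [Set.mem_Iio] at hj; omega)

lemma commute_virt {x v : UVB n} (hv : v ∈ virt n k) (hx : ∀ j < k, Commute x (rho n j)) :
    Commute x v :=
  (Subgroup.mem_centralizer_singleton_iff.1 <| (Subgroup.closure_le _).2 (by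
    rintro _ ⟨j, hj, rfl⟩
    exact Subgroup.mem_centralizer_singleton_iff.2 (hx j hj).symm) hv).symm

lemma commute_rho_virt {v : UVB n} (h : k < l) (hv : v ∈ virt n k) : Commute (rho n l) v :=
  commute_virt hv fun _ _ => commute_rho_rho n (by omega)

lemma commute_sigma_virt {v : UVB n} (h : k < l) (hv : v ∈ virt n k) : Commute (sigma n l) v :=
  commute_virt hv fun _ _ => commute_sigma_rho n (by omega)

open DoubleCoset in
lemma virt_add_two_subset (h : k + 1 < n) : (virt n (k + 2) : Set (UVB n)) ⊆
    virt n (k + 1) ∪ doubleCoset (rho n (k + 1)) (virt n (k + 1)) (virt n (k + 1)) := by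
  induction k with
  | zero =>
    refine fun v hv => mem_or_mem_doubleCoset (rho_mul_self n 1) (fun b hb => .inl ?_)
      (virt_succ n 1 ▸ hv)
    obtain rfl := Subgroup.mem_bot.1 (virt_one n ▸ hb)
    simp
  | succ k ih =>
    refine fun v hv => mem_or_mem_doubleCoset (rho_mul_self n (k + 2)) (fun b hb => ?_)
      (virt_succ n (k + 2) ▸ hv)
    obtain hb' | hb' := ih (by omega) hb
    · rw [(commute_rho_virt (by omega) hb').eq, mul_assoc, rho_mul_self, mul_one]
      exact .inl hb
    · obtain ⟨c, hc, d, hd, rfl⟩ := mem_doubleCoset.1 hb'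
      have hrho : rho n (k + 1) ∈ virt n (k + 2) := rho_mem_virt (by omega)
      refine .inr (mem_doubleCoset.2 ⟨c * rho n (k + 1),
        mul_mem (virt_mono (by omega) hc) hrho, rho n (k + 1) * d,
        mul_mem hrho (virt_mono (by omega) hd), ?_⟩)
      calc rho n (k + 2) * (c * rho n (k + 1) * d) * rho n (k + 2)
          = rho n (k + 2) * c * rho n (k + 1) * (d * rho n (k + 2)) := by simp only [mul_assoc]
        _ = c * (rho n (k + 2) * rho n (k + 1) * rho n (k + 2)) * d := by
            rw [(commute_rho_virt (by omega) hc).eq, ← (commute_rho_virt (by omega) hd).eq]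
            simp only [mul_assoc]
        _ = c * rho n (k + 1) * rho n (k + 2) * (rho n (k + 1) * d) := by
            rw [← rho_braid (by omega)]
            simp only [mul_assoc]

lemma permHom_apply_of_mem_virt {v : UVB n} (hv : v ∈ virt n k) {x : Fin n} (hx : k ≤ x) :
    permHom v x = x := by
  suffices virt n k ≤ (MulAction.stabilizer (Perm (Fin n)) x).comap permHom from this hv
  refine (Subgroup.closure_le _).2 ?_
  rintro _ ⟨_ | j, hj, rfl⟩
  · simp only [rho_of_not (n := n) (k := 0) (by omega), SetLike.mem_coe, one_mem]
  · have hj : j + 1 < k := hj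
    change permHom (rho n (j + 1)) x = x
    rw [permHom_rho (x := ⟨j, by omega⟩) (y := ⟨j + 1, by omega⟩) rfl]
    exact swap_apply_of_ne_of_ne (Fin.ne_of_val_ne (by dsimp only; omega))
      (Fin.ne_of_val_ne (by dsimp only; omega))

lemma mem_virt_of_permHom_apply {v : UVB n} {x : Fin n} (hv : v ∈ virt n (x + 1))
    (hx : permHom v x = x) : v ∈ virt n x := by
  obtain ⟨_ | k, hk⟩ := x
  · obtain rfl := Subgroup.mem_bot.1 (virt_one n ▸ hv)
    exact one_mem _
  · refine (virt_add_two_subset hk hv).resolve_right fun hv' => ?_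
    obtain ⟨a, ha, b, hb, rfl⟩ := DoubleCoset.mem_doubleCoset.1 hv'
    rw [map_mul, map_mul, Perm.mul_apply, Perm.mul_apply,
      permHom_apply_of_mem_virt hb le_rfl,
      permHom_rho (x := ⟨k, by omega⟩) (y := ⟨k + 1, hk⟩) rfl, swap_apply_right,
      ← permHom_apply_of_mem_virt ha (x := ⟨k + 1, hk⟩) le_rfl, EmbeddingLike.apply_eq_iff_eq] at hx
    simp at hx

lemma map_permHom_virt (n : ℕ) : (virt n n).map permHom = ⊤ := by
  obtain _ | n := n
  · exact Subsingleton.elim _ _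
  rw [eq_top_iff, ← Subgroup.toSubmonoid_le, Subgroup.top_toSubmonoid,
    ← Perm.mclosure_swap_castSucc_succ, Submonoid.closure_le]
  rintro _ ⟨i, rfl⟩
  exact ⟨rho (n + 1) (i + 1), rho_mem_virt (by omega), permHom_rho (y := i.succ) rfl⟩

lemma exists_mem_virt {r : ℕ} {f g : Fin r → Fin n} (hf : f.Injective) (hg : g.Injective) :
    ∃ v ∈ virt n n, ∀ x, permHom v (f x) = g x := by
  obtain ⟨π, hπ⟩ := (Perm.isMultiplyPretransitive (Fin n) r).exists_smul_eq ⟨f, hf⟩ ⟨g, hg⟩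
  obtain ⟨v, hv, rfl⟩ : π ∈ (virt n n).map permHom := map_permHom_virt n ▸ Subgroup.mem_top π
  exact ⟨v, hv, fun x => DFunLike.congr_fun hπ x⟩

lemma map_incl_virt (h : k ≤ n) : (virt n k).map (incl n) = virt (n + 1) k := by
  rw [virt, virt, MonoidHom.map_closure, Set.image_image]
  exact congrArg _ (Set.image_congr fun j hj => incl_rho (lt_of_lt_of_le hj h))

/-! ### Pure generators -/

lemma lam_add_one_right {i j : ℕ} (h : i < j) :
    lam n i (j + 1) = rho n j * lam n i j * rho n j := by
  have hlen : j + 1 - 1 - i = (j - 1 - i) + 1 := by omega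
  have hend : i + 1 + (j - 1 - i) = j := by omega
  rw [lam, lam, if_pos (by omega), if_pos h, hlen, List.range'_1_concat, hend]
  simp only [List.reverse_append, List.reverse_cons, List.reverse_nil, List.nil_append,
    List.map_append, List.map_cons, List.map_nil, List.prod_append, List.prod_cons, List.prod_nil,
    mul_one, mul_assoc]

lemma lam_add_one_left {i j : ℕ} (h : j < i) :
    lam n (i + 1) j = rho n i * lam n i j * rho n i := by
  have hlen : i + 1 - 1 - j = (i - 1 - j) + 1 := by omega
  have hend : j + 1 + (i - 1 - j) = i := by omega
  rw [lam, lam, if_neg (by omega), if_pos (by omega), if_neg (by omega), if_pos h, hlen,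
    List.range'_1_concat, hend]
  simp only [List.reverse_append, List.reverse_cons, List.reverse_nil, List.nil_append,
    List.map_append, List.map_cons, List.map_nil, List.prod_append, List.prod_cons, List.prod_nil,
    mul_one, mul_assoc]

/-- The pure generators `λ_{i,j}`, with strands numbered from `0` by `Fin n`. -/
def pureGen (i j : Fin n) : UVB n := lam n (i + 1) (j + 1)

lemma pureGen_of_add_one {x y : Fin n} (h : (x : ℕ) + 1 = y) :
    pureGen x y = rho n y * (sigma n y)⁻¹ := by
  simp [pureGen, lam, ← h]

lemma pureGen_of_add_one' {x y : Fin n} (h : (x : ℕ) + 1 = y) :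
    pureGen y x = (sigma n y)⁻¹ * rho n y := by
  simp [pureGen, lam, ← h]

lemma sigma_eq_pureGen_inv_mul_rho {x y : Fin n} (h : (x : ℕ) + 1 = y) :
    sigma n y = (pureGen x y)⁻¹ * rho n y := by
  simp [pureGen_of_add_one h, mul_assoc]

lemma pureGen_add_one_right {x y z : Fin n} (hxy : x < y) (hyz : (y : ℕ) + 1 = z) :
    pureGen x z = rho n z * pureGen x y * rho n z := by
  rw [pureGen, pureGen, ← hyz, lam_add_one_right (by omega)]

lemma pureGen_add_one_left {x y z : Fin n} (hxy : x < y) (hyz : (y : ℕ) + 1 = z) :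
    pureGen z x = rho n z * pureGen y x * rho n z := by
  rw [pureGen, pureGen, ← hyz, lam_add_one_left (by omega)]

/-- Some virtual braid conjugates the pure generator of the pair `(i, j)` to that of `(i', j')`,
and its permutation takes the first pair to the second. -/
def Transports (i j i' j' : Fin n) : Prop :=
  ∃ v ∈ virt n n, permHom v i = i' ∧ permHom v j = j' ∧ SemiconjBy v (pureGen i j) (pureGen i' j')

namespace Transports

variable {i j i' j' i'' j'' x y z : Fin n}

lemma refl (i j : Fin n) : Transports i j i j :=
  ⟨1, one_mem _, by simp, by simp, .one_left _⟩

lemma symm : Transports i j i' j' → Transports i' j' i j := by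
  rintro ⟨v, hv, rfl, rfl, h⟩
  exact ⟨v⁻¹, inv_mem hv, by simp, by simp, h.inv_symm_left⟩

lemma trans : Transports i j i' j' → Transports i' j' i'' j'' → Transports i j i'' j'' := by
  rintro ⟨v, hv, rfl, rfl, h⟩ ⟨w, hw, rfl, rfl, h'⟩
  exact ⟨w * v, mul_mem hw hv, by simp, by simp, h'.mul_left h⟩

lemma shift (hxy : (x : ℕ) + 1 = y) (hyz : (y : ℕ) + 1 = z) : Transports x y y z := by
  have hρσ : SemiconjBy (rho n y * rho n z) (sigma n y) (sigma n z) := by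
    rw [SemiconjBy, ← hyz, ← hxy, ← mul_assoc]
    exact rho_rho_sigma (by omega)
  have hρρ : SemiconjBy (rho n y * rho n z) (rho n y) (rho n z) := by
    rw [SemiconjBy, ← hyz, ← hxy, ← mul_assoc]
    exact rho_braid (by omega)
  refine ⟨rho n y * rho n z, mul_mem (rho_mem_virt y.2) (rho_mem_virt z.2), ?_, ?_, ?_⟩
  · rw [map_mul, permHom_rho hxy, permHom_rho hyz, Perm.mul_apply,
      (swap_apply_of_ne_of_ne (by omega) (by omega) : swap y z x = x), swap_apply_left]
  · rw [map_mul, permHom_rho hxy, permHom_rho hyz, Perm.mul_apply, swap_apply_left,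
      swap_apply_of_ne_of_ne (by omega) (by omega)]
  · rw [pureGen_of_add_one hxy, pureGen_of_add_one hyz]
    exact hρρ.mul_right hρσ.inv_right

lemma flip (hxy : (x : ℕ) + 1 = y) : Transports x y y x := by
  refine ⟨rho n y, rho_mem_virt y.2, ?_, ?_, ?_⟩
  · rw [permHom_rho hxy, swap_apply_left]
  · rw [permHom_rho hxy, swap_apply_right]
  · rw [pureGen_of_add_one hxy, pureGen_of_add_one' hxy, SemiconjBy, ← mul_assoc, rho_mul_self,
      one_mul, mul_assoc, rho_mul_self, mul_one]

lemma add_one_right (hxy : x < y) (hyz : (y : ℕ) + 1 = z) : Transports x y x z := by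
  refine ⟨rho n z, rho_mem_virt z.2, ?_, ?_, ?_⟩
  · rw [permHom_rho hyz, swap_apply_of_ne_of_ne (by omega) (by omega)]
  · rw [permHom_rho hyz, swap_apply_left]
  · rw [pureGen_add_one_right hxy hyz, SemiconjBy, mul_assoc _ _ (rho n z), rho_mul_self, mul_one]

lemma add_one_left (hxy : x < y) (hyz : (y : ℕ) + 1 = z) : Transports y x z x := by
  refine ⟨rho n z, rho_mem_virt z.2, ?_, ?_, ?_⟩
  · rw [permHom_rho hyz, swap_apply_left]
  · rw [permHom_rho hyz, swap_apply_of_ne_of_ne (by omega) (by omega)]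
  · rw [pureGen_add_one_left hxy hyz, SemiconjBy, mul_assoc _ _ (rho n z), rho_mul_self, mul_one]

lemma of_adjacent {i j : Fin n} (hxy : (x : ℕ) + 1 = y) (hyn : (y : ℕ) + 1 = n)
    (hij : (i : ℕ) + 1 = j) : Transports i j x y := by
  obtain hj | hj : (j : ℕ) + 1 = n ∨ (j : ℕ) + 1 < n := by omega
  · obtain rfl : j = y := by omega
    obtain rfl : i = x := by omega
    exact refl i j
  · exact (shift (z := ⟨j + 1, hj⟩) hij rfl).trans (of_adjacent hxy hyn rfl)
termination_by n - j

lemma of_lt {i j : Fin n} (hxy : (x : ℕ) + 1 = y) (hyn : (y : ℕ) + 1 = n) (hij : i < j) :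
    Transports i j x y ∧ Transports j i x y := by
  obtain hj | hj : (i : ℕ) + 1 = j ∨ (i : ℕ) + 1 < j := by omega
  · have h := of_adjacent hxy hyn hj
    exact ⟨h, (flip hj).symm.trans h⟩
  · let k : Fin n := ⟨j - 1, by omega⟩
    have hik : i < k := Fin.lt_def.2 (by dsimp only [k]; omega)
    have hkj : (k : ℕ) + 1 = j := by dsimp only [k]; omega
    obtain ⟨h, h'⟩ := of_lt hxy hyn hik
    exact ⟨(add_one_right hik hkj).symm.trans h, (add_one_left hik hkj).symm.trans h'⟩
termination_by (j : ℕ)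

end Transports

lemma semiconjBy_pureGen {v : UVB n} (hv : v ∈ virt n n) {i j : Fin n} (hij : i ≠ j) :
    SemiconjBy v (pureGen i j) (pureGen (permHom v i) (permHom v j)) := by
  obtain ⟨x, y, hxy, hyn⟩ : ∃ x y : Fin n, (x : ℕ) + 1 = y ∧ (y : ℕ) + 1 = n :=
    ⟨⟨n - 2, by omega⟩, ⟨n - 1, by omega⟩, by dsimp only; omega, by dsimp only; omega⟩
  have transports {i j : Fin n} (hij : i ≠ j) : Transports x y i j :=
    (hij.lt_or_gt.elim (fun h => (Transports.of_lt hxy hyn h).1)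
      fun h => (Transports.of_lt hxy hyn h).2).symm
  obtain ⟨u, hu, hux, huy, huc⟩ := transports hij
  obtain ⟨w, hw, hwx, hwy, hwc⟩ := transports ((permHom v).injective.ne hij)
  have hmem : w⁻¹ * v * u ∈ virt n n := mul_mem (mul_mem (inv_mem hw) hv) hu
  have hfix_y : permHom (w⁻¹ * v * u) y = y := by simp [huy, ← hwy]
  have hfix_x : permHom (w⁻¹ * v * u) x = x := by simp [hux, ← hwx]
  have hmem_x : w⁻¹ * v * u ∈ virt n x :=
    mem_virt_of_permHom_apply (virt_mono hxy.ge
      (mem_virt_of_permHom_apply (virt_mono hyn.ge hmem) hfix_y)) hfix_x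
  have hcomm : Commute (w⁻¹ * v * u) (pureGen x y) := by
    rw [pureGen_of_add_one hxy]
    exact ((commute_rho_virt (by omega) hmem_x).mul_left
      (commute_sigma_virt (by omega) hmem_x).inv_left).symm
  have h := (hwc.mul_left hcomm).mul_left huc.inv_symm_left
  rwa [show w * (w⁻¹ * v * u) * u⁻¹ = v by group] at h

/-! ### Commutation of pure generators -/

section ForbiddenRelations

/- Here `a`, `b`, `c` stand for the inverses of `λ_{0,1}`, `λ_{0,2}`, `λ_{1,2}` and `u`, `v` for
`ρ_1`, `ρ_2`, so that `σ_1 = a * u` and `σ_2 = c * v`. -/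
variable {G : Type*} [Group G] {u v a b c : G} (huc : SemiconjBy u c b) (hub : SemiconjBy u b c)
  (hva : SemiconjBy v a b) (hvb : SemiconjBy v b a) (huv : u * v * u = v * u * v)

include huc hub hva huv in
lemma commute_of_rho_sigma_sigma (h : u * (c * v) * (a * u) = c * v * (a * u) * v) :
    Commute b c := by
  refine mul_right_cancel (b := u * v * u) ?_
  calc b * c * (u * v * u)
      = b * (c * u) * v * u := by simp only [mul_assoc]
    _ = b * u * (b * v) * u := by rw [← hub.eq]; simp only [mul_assoc]
    _ = u * c * (v * a) * u := by rw [hva.eq, huc.eq]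
    _ = u * (c * v) * (a * u) := by simp only [mul_assoc]
    _ = c * (v * a) * u * v := by rw [h]; simp only [mul_assoc]
    _ = c * b * (u * v * u) := by rw [hva.eq, huv]; simp only [mul_assoc]

include huc hva hvb huv in
lemma commute_of_rho_sigma_sigma' (h : v * (a * u) * (c * v) = a * u * (c * v) * u) :
    Commute a b := by
  refine mul_right_cancel (b := u * v * u) ?_
  calc a * b * (u * v * u)
      = a * (b * u) * v * u := by simp only [mul_assoc]
    _ = a * u * (c * v) * u := by rw [← huc.eq]; simp only [mul_assoc]
    _ = v * a * (u * c) * v := by rw [← h]; simp only [mul_assoc]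
    _ = b * (v * b) * u * v := by rw [hva.eq, huc.eq]; simp only [mul_assoc]
    _ = b * a * (u * v * u) := by rw [hvb.eq, huv]; simp only [mul_assoc]

include huc hub hva hvb huv in
lemma commute_of_sigma_braid (hbc : Commute b c) (hab : Commute a b)
    (h : a * u * (c * v) * (a * u) = c * v * (a * u) * (c * v)) : Commute a c := by
  refine mul_left_cancel (a := b) (mul_right_cancel (b := u * v * u) ?_)
  calc b * (a * c) * (u * v * u)
      = a * b * (c * u) * v * u := by rw [hab.eq]; simp only [mul_assoc]
    _ = a * (b * u) * (b * v) * u := by rw [← hub.eq]; simp only [mul_assoc]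
    _ = a * u * (c * v) * (a * u) := by rw [← huc.eq, ← hva.eq]; simp only [mul_assoc]
    _ = c * (v * a) * (u * c) * v := by rw [h]; simp only [mul_assoc]
    _ = c * b * (v * b) * u * v := by rw [hva.eq, huc.eq]; simp only [mul_assoc]
    _ = b * (c * a) * (u * v * u) := by rw [hvb.eq, ← hbc.eq, huv]; simp only [mul_assoc]

end ForbiddenRelations

lemma commute_of_semiconjBy {G : Type*} [Group G] {v a a' b b' : G} (ha : SemiconjBy v a a')
    (hb : SemiconjBy v b b') (h : Commute a b) : Commute a' b' := by
  rw [← mul_inv_eq_iff_eq_mul.2 ha.eq, ← mul_inv_eq_iff_eq_mul.2 hb.eq]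
  exact h.conj v

section Consecutive

variable {x y z w : Fin n} (hxy : (x : ℕ) + 1 = y) (hyz : (y : ℕ) + 1 = z)
include hxy hyz

lemma commute_pureGen_of_consecutive :
    Commute (pureGen x z) (pureGen y z) ∧ Commute (pureGen x y) (pureGen x z) ∧
      Commute (pureGen x y) (pureGen y z) := by
  have hne : x ≠ y ∧ y ≠ z ∧ x ≠ z := by omega
  have semiconj {i j k i' j' : Fin n} (hij : i ≠ j) (hk : rho n k ∈ virt n n)
      (hi : permHom (rho n k) i = i') (hj : permHom (rho n k) j = j') :
      SemiconjBy (rho n k) (pureGen i j)⁻¹ (pureGen i' j')⁻¹ :=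
    (hi ▸ hj ▸ semiconjBy_pureGen hk hij).inv_right
  have hu : rho n y ∈ virt n n := rho_mem_virt y.2
  have hv : rho n z ∈ virt n n := rho_mem_virt z.2
  have hux : permHom (rho n y) x = y := by rw [permHom_rho hxy, swap_apply_left]
  have huy : permHom (rho n y) y = x := by rw [permHom_rho hxy, swap_apply_right]
  have huz : permHom (rho n y) z = z := by
    rw [permHom_rho hxy, swap_apply_of_ne_of_ne hne.2.2.symm hne.2.1.symm]
  have hvx : permHom (rho n z) x = x := by
    rw [permHom_rho hyz, swap_apply_of_ne_of_ne hne.1 hne.2.2]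
  have hvy : permHom (rho n z) y = z := by rw [permHom_rho hyz, swap_apply_left]
  have hvz : permHom (rho n z) z = y := by rw [permHom_rho hyz, swap_apply_right]
  have huc := semiconj hne.2.1 hu huy huz
  have hub := semiconj hne.2.2 hu hux huz
  have hva := semiconj hne.1 hv hvx hvy
  have hvb := semiconj hne.2.2 hv hvx hvz
  have hn : (x : ℕ) + 2 < n := by omega
  have hρ := rho_braid hn
  have hρσσ := rho_sigma_sigma hn
  have hρσσ' := rho_sigma_sigma' hn
  have hσ := sigma_braid hn
  simp only [show (x : ℕ) + 2 = z by omega, hxy, sigma_eq_pureGen_inv_mul_rho hxy,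
    sigma_eq_pureGen_inv_mul_rho hyz] at hρ hρσσ hρσσ' hσ
  have hbc := commute_of_rho_sigma_sigma huc hub hva hρ hρσσ
  have hab := commute_of_rho_sigma_sigma' huc hva hvb hρ hρσσ'
  have hac := commute_of_sigma_braid huc hub hva hvb hρ hbc hab hσ
  exact ⟨Commute.inv_inv_iff.1 hbc, Commute.inv_inv_iff.1 hab, Commute.inv_inv_iff.1 hac⟩

lemma commute_pureGen_of_consecutive_four (hzw : (z : ℕ) + 1 = w) :
    Commute (pureGen x y) (pureGen z w) := by
  rw [pureGen_of_add_one hxy, pureGen_of_add_one hzw]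
  have hfar : (y : ℕ) + 2 ≤ w ∨ (w : ℕ) + 2 ≤ y := by omega
  have hρ := (commute_rho_rho n hfar).mul_right (commute_sigma_rho n hfar.symm).inv_left.symm
  have hσ := (commute_sigma_rho n hfar).mul_right (commute_sigma_sigma n hfar).inv_right
  exact hρ.mul_left hσ.inv_left

end Consecutive

lemma commute_pureGen_of_ne {i j k : Fin n} (hij : i ≠ j) (hik : i ≠ k) (hjk : j ≠ k) :
    Commute (pureGen i k) (pureGen j k) ∧ Commute (pureGen i j) (pureGen i k) ∧
      Commute (pureGen i j) (pureGen j k) := by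
  have hinj : Function.Injective ![i, j, k] := by
    simpa [Function.Injective, Fin.forall_fin_succ, eq_comm] using
      ⟨⟨hij, hik⟩, ⟨hij, hjk⟩, hik, hjk⟩
  have hn : 3 ≤ n := by simpa using Fintype.card_le_of_injective _ hinj
  obtain ⟨v, hv, hvx⟩ := exists_mem_virt (Fin.castLE_injective hn) hinj
  obtain ⟨h₁, h₂, h₃⟩ := commute_pureGen_of_consecutive (x := Fin.castLE hn 0)
    (y := Fin.castLE hn 1) (z := Fin.castLE hn 2) rfl rfl
  have semiconj {x y : Fin 3} (h : x ≠ y) :=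
    semiconjBy_pureGen hv ((Fin.castLE_injective hn).ne h)
  simp only [hvx] at semiconj
  exact ⟨commute_of_semiconjBy (semiconj (by decide)) (semiconj (by decide)) h₁,
    commute_of_semiconjBy (semiconj (by decide)) (semiconj (by decide)) h₂,
    commute_of_semiconjBy (semiconj (by decide)) (semiconj (by decide)) h₃⟩

lemma commute_pureGen_of_disjoint {i j k l : Fin n} (hinj : Function.Injective ![i, j, k, l]) :
    Commute (pureGen i j) (pureGen k l) := by
  have hn : 4 ≤ n := by simpa using Fintype.card_le_of_injective _ hinj
  obtain ⟨v, hv, hvx⟩ := exists_mem_virt (Fin.castLE_injective hn) hinj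
  have semiconj {x y : Fin 4} (h : x ≠ y) :=
    semiconjBy_pureGen hv ((Fin.castLE_injective hn).ne h)
  simp only [hvx] at semiconj
  exact commute_of_semiconjBy (semiconj (x := 0) (y := 1) (by decide))
    (semiconj (x := 2) (y := 3) (by decide))
    (commute_pureGen_of_consecutive_four (y := Fin.castLE hn 1) rfl (z := Fin.castLE hn 2) rfl rfl)

lemma commute_pureGen {i j k l : Fin n} (hij : i ≠ j) (hkl : k ≠ l) (h : s(i, j) ≠ s(k, l)) :
    Commute (pureGen i j) (pureGen k l) := by
  by_cases hik : i = k
  · subst hik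
    exact (commute_pureGen_of_ne hij hkl fun hjl => h (hjl ▸ rfl)).2.1
  by_cases hjl : j = l
  · subst hjl
    exact (commute_pureGen_of_ne hik hij hkl).1
  by_cases hil : i = l
  · subst hil
    have hkj : k ≠ j := by rintro rfl; exact h Sym2.eq_swap
    exact (commute_pureGen_of_ne hkl hkj hij).2.2.symm
  by_cases hjk : j = k
  · subst hjk
    exact (commute_pureGen_of_ne hij hil hkl).2.2
  refine commute_pureGen_of_disjoint ?_
  simpa [Function.Injective, Fin.forall_fin_succ, eq_comm] using
    ⟨⟨hij, hik, hil⟩, ⟨hij, hjk, hjl⟩, ⟨hik, hjk, hkl⟩, hil, hjl, hkl⟩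

lemma exists_pureGen_eq_conj {i j : Fin n} (hij : i ≠ j) :
    ∃ v ∈ virt n n, ∃ x y : Fin n, (x : ℕ) + 1 = y ∧ permHom v x = i ∧ permHom v y = j ∧
      pureGen i j = v * pureGen x y * v⁻¹ := by
  obtain ⟨x, y, hxy⟩ : ∃ x y : Fin n, (x : ℕ) + 1 = y :=
    ⟨⟨0, by omega⟩, ⟨1, by omega⟩, rfl⟩
  have hne : x ≠ y := by omega
  have hinj : Function.Injective ![x, y] ∧ Function.Injective ![i, j] := by
    simp [Function.Injective, Fin.forall_fin_succ, hij, hij.symm, hne, hne.symm]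
  obtain ⟨v, hv, hvf⟩ := exists_mem_virt hinj.1 hinj.2
  have hi : permHom v x = i := hvf 0
  have hj : permHom v y = j := hvf 1
  refine ⟨v, hv, x, y, hxy, hi, hj, ?_⟩
  rw [eq_mul_inv_iff_mul_eq, ← hi, ← hj]
  exact (semiconjBy_pureGen hv hne).eq.symm

lemma permHom_pureGen {i j : Fin n} (hij : i ≠ j) : permHom (pureGen i j) = 1 := by
  obtain ⟨v, -, x, y, hxy, -, -, h⟩ := exists_pureGen_eq_conj hij
  simp [h, pureGen_of_add_one hxy, permHom_rho hxy, permHom_sigma hxy]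

lemma incl_pureGen {i j : Fin n} (hij : i ≠ j) :
    incl n (pureGen i j) = pureGen i.castSucc j.castSucc := by
  obtain ⟨v, hv, x, y, hxy, rfl, rfl, h⟩ := exists_pureGen_eq_conj hij
  have hv' : incl n v ∈ virt (n + 1) (n + 1) :=
    virt_mono n.le_succ (map_incl_virt le_rfl ▸ Subgroup.mem_map_of_mem _ hv)
  have hxy' : (x.castSucc : ℕ) + 1 = y.castSucc := hxy
  have hincl : incl n (pureGen x y) = pureGen x.castSucc y.castSucc := by
    rw [pureGen_of_add_one hxy, pureGen_of_add_one hxy', map_mul, map_inv, incl_rho y.2,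
      incl_sigma y.2, Fin.val_castSucc]
  rw [h, map_mul, map_mul, map_inv, hincl, mul_inv_eq_iff_eq_mul, ← permHom_incl_castSucc,
    ← permHom_incl_castSucc]
  exact (semiconjBy_pureGen hv' (by omega)).eq

/-! ### Pure braids supported on a set of pairs of strands -/

/-- The subgroup generated by the pure generators `λ_{i,j}` and `λ_{j,i}` of the pairs `{i, j}`
in `A`. -/
def pureOn (A : Set (Sym2 (Fin n))) : Subgroup (UVB n) :=
  Subgroup.closure {x | ∃ i j, i ≠ j ∧ s(i, j) ∈ A ∧ x = pureGen i j}

section PureOn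

variable {A B : Set (Sym2 (Fin n))} {p q v : UVB n}

lemma pureGen_mem_pureOn {i j : Fin n} (hij : i ≠ j) (h : s(i, j) ∈ A) : pureGen i j ∈ pureOn A :=
  Subgroup.subset_closure ⟨i, j, hij, h, rfl⟩

lemma pureOn_le {H : Subgroup (UVB n)} :
    pureOn A ≤ H ↔ ∀ i j, i ≠ j → s(i, j) ∈ A → pureGen i j ∈ H := by
  rw [pureOn, Subgroup.closure_le]
  exact ⟨fun h i j hij hA => h ⟨i, j, hij, hA, rfl⟩,
    fun h => by rintro _ ⟨i, j, hij, hA, rfl⟩; exact h i j hij hA⟩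

lemma pureOn_mono (h : A ⊆ B) : pureOn A ≤ pureOn B :=
  pureOn_le.2 fun _ _ hij hA => pureGen_mem_pureOn hij (h hA)

lemma permHom_of_mem_pureOn (hp : p ∈ pureOn A) : permHom p = 1 := by
  suffices pureOn A ≤ permHom.ker from this hp
  exact pureOn_le.2 fun _ _ hij _ => permHom_pureGen hij

lemma commute_of_mem_pureOn (hAB : Disjoint A B) (hp : p ∈ pureOn A) (hq : q ∈ pureOn B) :
    Commute p q := by
  suffices pureOn A ≤ Subgroup.centralizer (pureOn B) from
    (Subgroup.mem_centralizer_iff.1 (this hp) q hq).symm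
  refine pureOn_le.2 fun i j hij hA => ?_
  rw [Subgroup.mem_centralizer_iff]
  intro x hx
  suffices pureOn B ≤ Subgroup.centralizer {pureGen i j} from
    (Subgroup.mem_centralizer_singleton_iff.1 (this hx))
  refine pureOn_le.2 fun k l hkl hB => Subgroup.mem_centralizer_singleton_iff.2 ?_
  exact (commute_pureGen hkl hij fun h => hAB.ne_of_mem hA hB h.symm).eq

lemma exists_mul_of_mem_pureOn (hAB : Disjoint A B) (hp : p ∈ pureOn (A ∪ B)) :
    ∃ x ∈ pureOn A, ∃ y ∈ pureOn B, p = x * y := by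
  have hle : pureOn (A ∪ B) ≤ pureOn A ⊔ pureOn B := pureOn_le.2 fun _ _ hij h => h.elim
    (fun hA => Subgroup.mem_sup_left (pureGen_mem_pureOn hij hA))
    fun hB => Subgroup.mem_sup_right (pureGen_mem_pureOn hij hB)
  have hcent : pureOn A ≤ Subgroup.centralizer (pureOn B) := fun x hx =>
    Subgroup.mem_centralizer_iff.2 fun y hy => (commute_of_mem_pureOn hAB hx hy).eq.symm
  have hp' : p ∈ ((pureOn A ⊔ pureOn B : Subgroup _) : Set (UVB n)) := hle hp
  rw [Subgroup.coe_mul_of_left_le_normalizer_right _ _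
    (hcent.trans (Subgroup.centralizer_le_normalizer _))] at hp'
  obtain ⟨x, hx, y, hy, rfl⟩ := hp'
  exact ⟨x, hx, y, hy, rfl⟩

lemma conj_mem_pureOn (hv : v ∈ virt n n) (h : Set.MapsTo (Sym2.map (permHom v)) A B)
    (hp : p ∈ pureOn A) : v * p * v⁻¹ ∈ pureOn B := by
  suffices pureOn A ≤ (pureOn B).comap (MulAut.conj v).toMonoidHom from this hp
  refine pureOn_le.2 fun i j hij hA => ?_
  simp only [Subgroup.mem_comap, MulEquiv.toMonoidHom_eq_coe, MonoidHom.coe_coe,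
    MulAut.conj_apply, (semiconjBy_pureGen hv hij).eq, mul_inv_cancel_right]
  exact pureGen_mem_pureOn ((permHom v).injective.ne hij) (h hA)

lemma virt_le_normalizer_pureOn_univ :
    virt n n ≤ Subgroup.normalizer (pureOn .univ : Subgroup (UVB n)) := by
  intro v hv
  rw [Subgroup.mem_normalizer_iff]
  refine fun p => ⟨conj_mem_pureOn hv (Set.mapsTo_univ _ _), fun hp => ?_⟩
  simpa [mul_assoc] using conj_mem_pureOn (inv_mem hv) (Set.mapsTo_univ _ .univ) hp

lemma pureOn_univ_sup_virt : pureOn .univ ⊔ virt n n = ⊤ := by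
  rw [eq_top_iff, ← closure_generators, Subgroup.closure_le]
  rintro _ (⟨_ | k, hk, rfl⟩ | ⟨k, hk, rfl⟩)
  · simp only [sigma_of_not (n := n) (k := 0) (by omega), SetLike.mem_coe, one_mem]
  · let x : Fin n := ⟨k, Nat.lt_of_succ_lt hk⟩
    let y : Fin n := ⟨k + 1, hk⟩
    rw [sigma_eq_pureGen_inv_mul_rho (x := x) (y := y) rfl]
    have hpure : pureGen x y ∈ pureOn .univ :=
      pureGen_mem_pureOn (by simp [x, y, Fin.ext_iff]) (Set.mem_univ _)
    exact mul_mem (Subgroup.mem_sup_left (inv_mem hpure)) (Subgroup.mem_sup_right (rho_mem_virt hk))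
  · exact Subgroup.mem_sup_right (rho_mem_virt hk)

lemma exists_eq_mul_virt (α : UVB n) : ∃ p ∈ pureOn .univ, ∃ v ∈ virt n n, α = p * v := by
  have hα : α ∈ ((pureOn .univ ⊔ virt n n : Subgroup _) : Set (UVB n)) :=
    pureOn_univ_sup_virt ▸ Subgroup.mem_top α
  rw [Subgroup.coe_mul_of_right_le_normalizer_left _ _ virt_le_normalizer_pureOn_univ] at hα
  obtain ⟨p, hp, v, hv, rfl⟩ := hα
  exact ⟨p, hp, v, hv, rfl⟩

lemma map_incl_pureOn_univ (n : ℕ) :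
    (pureOn .univ).map (incl n) = pureOn {e | Fin.last n ∉ e} := by
  refine le_antisymm (Subgroup.map_le_iff_le_comap.2 (pureOn_le.2 fun i j hij _ => ?_))
    (pureOn_le.2 fun i j hij h => ?_)
  · rw [Subgroup.mem_comap, incl_pureGen hij]
    exact pureGen_mem_pureOn (Fin.castSucc_injective n |>.ne hij) (by
      simp [i.castSucc_ne_last.symm, j.castSucc_ne_last.symm])
  · simp only [Set.mem_ofPred_eq, Sym2.mem_iff, not_or] at h
    obtain ⟨i, rfl⟩ := Fin.exists_castSucc_eq.2 (Ne.symm h.1)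
    obtain ⟨j, rfl⟩ := Fin.exists_castSucc_eq.2 (Ne.symm h.2)
    have hij : i ≠ j := fun h => hij (h ▸ rfl)
    exact ⟨pureGen i j, pureGen_mem_pureOn hij (Set.mem_univ _), incl_pureGen hij⟩

lemma commute_incl_of_mem_pureOn {q : UVB (n + 1)} (hq : q ∈ pureOn {e | Fin.last n ∈ e})
    (hp : p ∈ pureOn .univ) : Commute q (incl n p) := by
  have hp' : incl n p ∈ pureOn {e | Fin.last n ∉ e} :=
    map_incl_pureOn_univ n ▸ Subgroup.mem_map_of_mem _ hp
  exact commute_of_mem_pureOn (Set.disjoint_left.2 fun _ => not_not_intro) hq hp'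

end PureOn

/-! ### Fused Markov equivalence -/

lemma markov_equivalence : Equivalence Markov := Relation.EqvGen.is_equivalence _

instance : Trans Markov Markov Markov := ⟨markov_equivalence.trans⟩

lemma markov_conj (α γ : UVB n) : Markov ⟨n, α⟩ ⟨n, γ * α * γ⁻¹⟩ := .rel _ _ (.conj n α γ)

lemma markov_rotate {x y v : UVB n} (p : UVB n) (h : SemiconjBy v x y) :
    Markov ⟨n, p * y * v⟩ ⟨n, x * p * v⟩ := by
  have hpy : x * (p * y * v) * x⁻¹ = x * p * v := by
    rw [mul_assoc p, ← h.eq]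
    group
  exact hpy ▸ markov_conj _ x

lemma markov_mul_conj (p q v : UVB n) : Markov ⟨n, p * q * v⟩ ⟨n, v⁻¹ * q * v * p * v⟩ :=
  markov_rotate p (by simp [SemiconjBy, mul_assoc])

/-- The virtual stabilization of a braid: the Markov move adding one strand and a virtual
crossing. -/
def virtStab (α : UVB n) : UVB (n + 1) := incl n α * rho (n + 1) n

lemma markov_virtStab (α : UVB n) : Markov ⟨n, α⟩ ⟨n + 1, virtStab α⟩ := .rel _ _ (.stabVirt n α)

lemma virtStab_mul (α β : UVB n) : virtStab (α * β) = incl n α * virtStab β := by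
  rw [virtStab, virtStab, map_mul, mul_assoc]

lemma incl_mem_virt {v : UVB n} (hv : v ∈ virt n n) : incl n v ∈ virt (n + 1) n :=
  map_incl_virt (n := n) le_rfl ▸ Subgroup.mem_map_of_mem _ hv

lemma virtStab_mem_virt {v : UVB n} (hv : v ∈ virt n n) : virtStab v ∈ virt (n + 1) (n + 1) :=
  mul_mem (virt_mono n.le_succ (incl_mem_virt hv)) (rho_mem_virt n.lt_succ_self)

section PermHom

variable (α : UVB (n + 1))

lemma permHom_rho_last (n : ℕ) :
    permHom (rho (n + 2) (n + 1)) = swap (Fin.last n).castSucc (Fin.last (n + 1)) :=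
  permHom_rho (y := Fin.last (n + 1)) rfl

lemma permHom_virtStab_last :
    permHom (virtStab α) (Fin.last (n + 1)) = (permHom α (Fin.last n)).castSucc := by
  simp [virtStab, permHom_rho_last]

lemma permHom_virtStab_castSucc {x : Fin (n + 1)} (hx : x ≠ Fin.last n) :
    permHom (virtStab α) x.castSucc = (permHom α x).castSucc := by
  simp [virtStab, permHom_rho_last, swap_apply_of_ne_of_ne, hx]

end PermHom

section ClassicalStabilization

variable (p : UVB (n + 1)) {v : UVB (n + 1)} (hv : v ∈ virt (n + 1) (n + 1))
include hv

lemma markov_stabNeg : Markov ⟨n + 1, p * v⟩ ⟨n + 2, incl _ p *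
    pureGen (Fin.last (n + 1)) (permHom v (Fin.last n)).castSucc * virtStab v⟩ := by
  have hσ : (sigma (n + 2) (n + 1))⁻¹ =
      pureGen (Fin.last (n + 1)) (Fin.last n).castSucc * rho (n + 2) (n + 1) := by
    rw [pureGen_of_add_one' (x := (Fin.last n).castSucc) (y := Fin.last (n + 1)) rfl, mul_assoc,
      Fin.val_last, rho_mul_self, mul_one]
  have hconj := semiconjBy_pureGen (virt_mono (n + 1).le_succ (incl_mem_virt hv))
    (Fin.castSucc_ne_last (Fin.last n)).symm
  rw [permHom_incl_last, permHom_incl_castSucc] at hconj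
  have h := MarkovBase.stabNeg (n + 1) (p * v)
  rw [hσ, map_mul, mul_assoc (incl _ p), ← mul_assoc (incl _ v), hconj.eq, mul_assoc,
    ← mul_assoc] at h
  exact .rel _ _ h

lemma markov_stabPos : Markov ⟨n + 1, p * v⟩ ⟨n + 2, incl _ p *
    (pureGen (permHom v (Fin.last n)).castSucc (Fin.last (n + 1)))⁻¹ * virtStab v⟩ := by
  have hσ : sigma (n + 2) (n + 1) =
      (pureGen (Fin.last n).castSucc (Fin.last (n + 1)))⁻¹ * rho (n + 2) (n + 1) :=
    sigma_eq_pureGen_inv_mul_rho (x := (Fin.last n).castSucc) (y := Fin.last (n + 1)) rfl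
  have hconj := (semiconjBy_pureGen (virt_mono (n + 1).le_succ (incl_mem_virt hv))
    (Fin.castSucc_ne_last (Fin.last n))).inv_right
  rw [permHom_incl_last, permHom_incl_castSucc] at hconj
  have h := MarkovBase.stabPos (n + 1) (p * v)
  rw [hσ, map_mul, mul_assoc (incl _ p), ← mul_assoc (incl _ v), hconj.eq, mul_assoc,
    ← mul_assoc] at h
  exact .rel _ _ h

end ClassicalStabilization

/-! ### Removing the crossings between two strands exchanged by the permutation -/

section Exchanged

variable {v : UVB (n + 1)} (hv : v ∈ virt (n + 1) (n + 1)) {b : Fin (n + 1)}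
  (hb : b ≠ Fin.last n) (hvb : permHom v b = Fin.last n) (hva : permHom v (Fin.last n) = b)
include hv hb hvb hva

lemma markov_mul_pureGen_of_swapped {t : UVB (n + 1)} (ht : t ∈ pureOn .univ) :
    Markov ⟨n + 1, t * pureGen b (Fin.last n) * v⟩ ⟨n + 1, t * v⟩ := by
  have hshift := semiconjBy_pureGen (virtStab_mem_virt hv) (Fin.castSucc_ne_last b).symm
  rw [permHom_virtStab_last, hva, permHom_virtStab_castSucc _ hb, hvb] at hshift
  have hcomm : Commute (pureGen (Fin.last (n + 1)) b.castSucc) (incl _ t) :=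
    commute_incl_of_mem_pureOn
      (pureGen_mem_pureOn (Fin.castSucc_ne_last b).symm (Sym2.mem_mk_left _ _)) ht
  calc Markov ⟨n + 1, t * pureGen b (Fin.last n) * v⟩
        ⟨n + 2, incl _ t * pureGen b.castSucc (Fin.last n).castSucc * virtStab v⟩ := by
        rw [← incl_pureGen hb, ← map_mul, ← virtStab_mul]
        exact markov_virtStab _
    Markov _ ⟨n + 2, incl _ t * pureGen (Fin.last (n + 1)) b.castSucc * virtStab v⟩ := by
        rw [← hcomm.eq]
        exact markov_rotate _ hshift
    Markov _ ⟨n + 1, t * v⟩ := by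
        rw [← hva]
        exact markov_equivalence.symm (markov_stabNeg t hv)

lemma markov_mul_pureGen_inv_of_swapped {t : UVB (n + 1)} (ht : t ∈ pureOn .univ) :
    Markov ⟨n + 1, t * (pureGen (Fin.last n) b)⁻¹ * v⟩ ⟨n + 1, t * v⟩ := by
  have hshift := (semiconjBy_pureGen (virtStab_mem_virt hv) (Fin.castSucc_ne_last b)).inv_right
  rw [permHom_virtStab_last, hva, permHom_virtStab_castSucc _ hb, hvb] at hshift
  have hcomm : Commute (pureGen b.castSucc (Fin.last (n + 1)))⁻¹ (incl _ t) :=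
    commute_incl_of_mem_pureOn
      (inv_mem (pureGen_mem_pureOn (Fin.castSucc_ne_last b) (Sym2.mem_mk_right _ _))) ht
  calc Markov ⟨n + 1, t * (pureGen (Fin.last n) b)⁻¹ * v⟩
        ⟨n + 2, incl _ t * (pureGen (Fin.last n).castSucc b.castSucc)⁻¹ * virtStab v⟩ := by
        rw [← incl_pureGen hb.symm, ← map_inv, ← map_mul, ← virtStab_mul]
        exact markov_virtStab _
    Markov _ ⟨n + 2, incl _ t * (pureGen b.castSucc (Fin.last (n + 1)))⁻¹ * virtStab v⟩ := by
        rw [← hcomm.eq]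
        exact markov_rotate _ hshift
    Markov _ ⟨n + 1, t * v⟩ := by
        rw [← hva]
        exact markov_equivalence.symm (markov_stabPos t hv)

lemma markov_mul_of_swapped {t w : UVB (n + 1)} (ht : t ∈ pureOn .univ)
    (hw : w ∈ pureOn {s(b, Fin.last n)}) : Markov ⟨n + 1, t * w * v⟩ ⟨n + 1, t * v⟩ := by
  induction hw using Subgroup.closure_induction generalizing t with
  | mem _ h =>
    obtain ⟨i, j, hij, h, rfl⟩ := h
    obtain ⟨rfl, rfl⟩ | ⟨rfl, rfl⟩ := Sym2.eq_iff.1 h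
    · exact markov_mul_pureGen_of_swapped hv hb hvb hva ht
    · have h := markov_mul_pureGen_inv_of_swapped hv hb hvb hva
        (mul_mem ht (pureGen_mem_pureOn hij (Set.mem_univ _)))
      rw [mul_inv_cancel_right] at h
      exact markov_equivalence.symm h
  | one => exact (mul_one t).symm ▸ markov_equivalence.refl _
  | mul w w' hw _ ih ih' =>
    rw [← mul_assoc]
    exact markov_equivalence.trans (ih' (mul_mem ht (pureOn_mono (Set.subset_univ _) hw))) (ih ht)
  | inv w hw ih =>
    have h := ih (mul_mem ht (inv_mem (pureOn_mono (Set.subset_univ _) hw)))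
    rw [inv_mul_cancel_right] at h
    exact markov_equivalence.symm h

end Exchanged

/-! ### Removing a strand -/

section MovedStrand

variable {p v : UVB (n + 1)} (hp : p ∈ pureOn .univ) (hv : v ∈ virt (n + 1) (n + 1))
  {b : Fin (n + 1)} (hb : b ≠ Fin.last n) (hvb : permHom v b = Fin.last n)
include hp hv hb hvb

lemma exists_markov_mul_of_permHom_apply :
    ∃ r ∈ pureOn {e | Fin.last n ∉ e}, ∃ w ∈ pureOn {s(b, Fin.last n)},
      Markov ⟨n + 1, p * v⟩ ⟨n + 1, r * w * v⟩ := by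
  obtain ⟨t, ht, q, hq, rfl⟩ := exists_mul_of_mem_pureOn (A := {e | Fin.last n ∉ e})
    (B := {e | Fin.last n ∈ e}) (Set.disjoint_left.2 fun _ h => h)
    (pureOn_mono (fun e _ => (em' (Fin.last n ∈ e))) hp)
  have hq' : v⁻¹ * q * v ∈ pureOn ({e | b ∈ e ∧ Fin.last n ∉ e} ∪ {s(b, Fin.last n)}) := by
    have hmaps : Set.MapsTo (Sym2.map (permHom v⁻¹)) {e | Fin.last n ∈ e}
        ({e | b ∈ e ∧ Fin.last n ∉ e} ∪ {s(b, Fin.last n)}) := fun e he => by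
      have hbe : b ∈ e.map (permHom v⁻¹) :=
        Sym2.mem_map.2 ⟨Fin.last n, he, by simp [← hvb]⟩
      by_cases hlast : Fin.last n ∈ e.map (permHom v⁻¹)
      · exact .inr ((Sym2.mem_and_mem_iff hb).1 ⟨hbe, hlast⟩)
      · exact .inl ⟨hbe, hlast⟩
    simpa using conj_mem_pureOn (inv_mem hv) hmaps hq
  have hrotate := markov_mul_conj t q v
  obtain ⟨x, hx, w, hw, hxw⟩ := exists_mul_of_mem_pureOn
    (Set.disjoint_singleton_right.2 fun h => h.2 (Sym2.mem_mk_right _ _)) hq'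
  have hwt : Commute w t := commute_of_mem_pureOn (B := {e | Fin.last n ∉ e})
    (Set.disjoint_singleton_left.2 fun h => h (Sym2.mem_mk_right _ _)) hw ht
  rw [hxw, mul_assoc x, hwt.eq, ← mul_assoc x] at hrotate
  exact ⟨x * t, mul_mem (pureOn_mono (fun _ h => h.2) hx) ht, w, hw, hrotate⟩

lemma exists_markov_mul_of_last_notMem :
    ∃ r ∈ pureOn {e | Fin.last n ∉ e}, Markov ⟨n + 1, p * v⟩ ⟨n + 1, r * v⟩ := by
  obtain ⟨r, hr, w, hw, h⟩ := exists_markov_mul_of_permHom_apply hp hv hb hvb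
  by_cases hva : permHom v (Fin.last n) = b
  · exact ⟨r, hr, markov_equivalence.trans h
      (markov_mul_of_swapped hv hb hvb hva (pureOn_mono (Set.subset_univ _) hr) hw)⟩
  · have hrotate := markov_mul_conj r w v
    have hw' : v⁻¹ * w * v ∈ pureOn {e | Fin.last n ∉ e} := by
      have hmaps : Set.MapsTo (Sym2.map (permHom v⁻¹)) {s(b, Fin.last n)}
          {e | Fin.last n ∉ e} := by
        rintro _ rfl
        have hlast : permHom v⁻¹ (Fin.last n) = b := by simp [← hvb]
        have hb' : permHom v⁻¹ b ≠ Fin.last n := by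
          rwa [map_inv, Ne, Perm.inv_eq_iff_eq, eq_comm]
        rw [Set.mem_ofPred_eq, Sym2.map_mk, hlast, Sym2.mem_iff]
        exact fun h => h.elim hb'.symm hb.symm
      simpa using conj_mem_pureOn (inv_mem hv) hmaps hw
    exact ⟨v⁻¹ * w * v * r, mul_mem hw' hr, markov_equivalence.trans h hrotate⟩

end MovedStrand

lemma exists_eq_virtStab {v : UVB (n + 2)} (hv : v ∈ virt (n + 2) (n + 2))
    (hvb : permHom v (Fin.last n).castSucc = Fin.last (n + 1)) :
    ∃ v' : UVB (n + 1), v = virtStab v' := by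
  have hmem : v * rho (n + 2) (n + 1) ∈ virt (n + 2) (Fin.last (n + 1) + 1) := by
    rw [Fin.val_last]
    exact mul_mem hv (rho_mem_virt (n + 1).lt_succ_self)
  have hfix : permHom (v * rho (n + 2) (n + 1)) (Fin.last (n + 1)) = Fin.last (n + 1) := by
    rw [map_mul, Perm.mul_apply, permHom_rho_last, swap_apply_right, hvb]
  have hmem' := mem_virt_of_permHom_apply hmem hfix
  rw [Fin.val_last, ← map_incl_virt (n := n + 1) le_rfl] at hmem'
  obtain ⟨v', -, hv'⟩ := hmem'
  exact ⟨v', by rw [virtStab, hv', mul_assoc, rho_mul_self, mul_one]⟩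

lemma exists_markov_mul_virt {α : UVB (n + 2)} (hα : permHom α ≠ 1) :
    ∃ p ∈ pureOn .univ, ∃ v ∈ virt (n + 2) (n + 2),
      permHom v (Fin.last n).castSucc = Fin.last (n + 1) ∧
        Markov ⟨n + 2, α⟩ ⟨n + 2, p * v⟩ := by
  obtain ⟨x, hx⟩ : ∃ x, permHom α x ≠ x := by
    simpa [Equiv.ext_iff] using hα
  obtain ⟨γ, -, hγ⟩ := exists_mem_virt (f := ![x, permHom α x])
    (g := ![(Fin.last n).castSucc, Fin.last (n + 1)])
    (by simp [Function.Injective, Fin.forall_fin_succ, hx, hx.symm])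
    (by simp [Function.Injective, Fin.forall_fin_succ, Fin.castSucc_ne_last,
      (Fin.castSucc_ne_last _).symm])
  have hγx : permHom γ x = (Fin.last n).castSucc := hγ 0
  have hγy : permHom γ (permHom α x) = Fin.last (n + 1) := hγ 1
  obtain ⟨p, hp, v, hv, hpv⟩ := exists_eq_mul_virt (γ * α * γ⁻¹)
  have hperm : permHom v = permHom (γ * α * γ⁻¹) := by
    rw [hpv, map_mul, permHom_of_mem_pureOn hp, one_mul]
  refine ⟨p, hp, v, hv, ?_, hpv ▸ markov_conj α γ⟩
  rw [hperm, ← hγx, ← hγy]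
  simp

lemma exists_markov_of_permHom_ne_one {α : UVB (n + 2)} (hα : permHom α ≠ 1) :
    ∃ α' : UVB (n + 1), Markov ⟨n + 2, α⟩ ⟨n + 1, α'⟩ := by
  obtain ⟨p, hp, v, hv, hvb, hpv⟩ := exists_markov_mul_virt hα
  obtain ⟨r, hr, hrv⟩ := exists_markov_mul_of_last_notMem hp hv (Fin.castSucc_ne_last _) hvb
  rw [← map_incl_pureOn_univ] at hr
  obtain ⟨t, -, rfl⟩ := hr
  obtain ⟨v, rfl⟩ := exists_eq_virtStab hv hvb
  rw [← virtStab_mul] at hrv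
  exact ⟨t * v, markov_equivalence.trans hpv
    (markov_equivalence.trans hrv (markov_equivalence.symm (markov_virtStab _)))⟩

lemma exists_markov_permHom_eq_one (α : UVB (n + 1)) :
    ∃ k, ∃ β : UVB (k + 1), permHom β = 1 ∧ Markov ⟨n + 1, α⟩ ⟨k + 1, β⟩ := by
  induction n with
  | zero =>
    exact ⟨0, α, Subsingleton.elim (α := Perm (Fin 1)) _ _, markov_equivalence.refl _⟩
  | succ n ih =>
    by_cases hα : permHom α = 1
    · exact ⟨n + 1, α, hα, markov_equivalence.refl _⟩
    · obtain ⟨α', hα'⟩ := exists_markov_of_permHom_ne_one hα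
      obtain ⟨k, β, hβ, hβ'⟩ := ih α'
      exact ⟨k, β, hβ, markov_equivalence.trans hα' hβ'⟩

/-! ### Counting orbits -/

section NumOrbits

variable {σ τ : Perm (Fin n)} {a b : Fin n}

lemma numOrbits_add_sum_cycleType (σ : Perm (Fin n)) :
    numOrbits σ + σ.cycleType.sum = n + σ.cycleType.card := by
  have hfixed : (Finset.univ.filter fun x => σ x = x) = σ.supportᶜ := by
    ext x
    simp
  have hcard := Finset.card_compl_add_card σ.support
  rw [Fintype.card_fin] at hcard
  rw [numOrbits, hfixed, Perm.sum_cycleType]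
  omega

lemma numOrbits_one (n : ℕ) : numOrbits (1 : Perm (Fin n)) = n := by
  simp [numOrbits]

lemma numOrbits_conj (σ τ : Perm (Fin n)) : numOrbits (τ * σ * τ⁻¹) = numOrbits σ := by
  have h := numOrbits_add_sum_cycleType (τ * σ * τ⁻¹)
  rw [Perm.cycleType_conj] at h
  exact Nat.add_right_cancel (h.trans (numOrbits_add_sum_cycleType σ).symm)

lemma numOrbits_viaEmbeddingHom_castSucc (σ : Perm (Fin n)) :
    numOrbits (Perm.viaEmbeddingHom Fin.castSuccEmb σ) = numOrbits σ + 1 := by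
  have htype : (Perm.viaEmbeddingHom Fin.castSuccEmb σ).cycleType = σ.cycleType := by
    rw [Perm.viaEmbeddingHom_apply, Perm.viaEmbedding]
    convert Perm.cycleType_extendDomain _
  have h := numOrbits_add_sum_cycleType (Perm.viaEmbeddingHom Fin.castSuccEmb σ)
  have h' := numOrbits_add_sum_cycleType σ
  rw [htype] at h
  omega

lemma numOrbits_mul_of_disjoint (h : Perm.Disjoint σ τ) :
    numOrbits (σ * τ) + n = numOrbits σ + numOrbits τ := by
  have hσ := numOrbits_add_sum_cycleType σ
  have hτ := numOrbits_add_sum_cycleType τ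
  have hmul := numOrbits_add_sum_cycleType (σ * τ)
  rw [h.cycleType_mul, Multiset.sum_add, Multiset.card_add] at hmul
  omega

lemma numOrbits_formPerm {l : List (Fin n)} (hl : (b :: l).Nodup) :
    numOrbits (b :: l).formPerm + l.length = n := by
  obtain _ | ⟨x, l⟩ := l
  · exact numOrbits_one n
  · have htype := (List.isCycle_formPerm hl (by simp)).cycleType
    rw [List.support_formPerm_of_nodup _ hl (by simp), List.toFinset_card_of_nodup hl] at htype
    have h := numOrbits_add_sum_cycleType (b :: x :: l).formPerm
    rw [htype, Multiset.sum_singleton, Multiset.card_singleton, List.length_cons] at h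
    omega

lemma disjoint_formPerm {l : List (Fin n)} (h : ∀ x ∈ l, σ x = x) :
    Perm.Disjoint l.formPerm σ := fun x =>
  if hx : x ∈ l then .inr (h x hx) else .inl (List.formPerm_apply_of_notMem hx)

lemma exists_eq_formPerm_mul (σ : Perm (Fin n)) (b : Fin n) :
    ∃ l τ, (b :: l).Nodup ∧ (∀ x ∈ b :: l, τ x = x) ∧ σ = (b :: l).formPerm * τ := by
  by_cases hb : σ b = b
  · exact ⟨[], σ, List.nodup_singleton b, by simpa using hb, by simp⟩
  have hmem : b ∈ σ.support := Perm.mem_support.2 hb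
  obtain ⟨c, l, hcl⟩ :=
    List.exists_cons_of_length_pos (Perm.length_toList_pos_of_mem_support σ b hmem)
  obtain rfl : c = b := by
    have h := Perm.toList_getElem_zero σ b hmem
    simpa only [hcl, List.getElem_cons_zero] using h
  refine ⟨l, (σ.cycleOf c)⁻¹ * σ, hcl ▸ Perm.nodup_toList σ c, fun x hx => ?_, ?_⟩
  · have hsame : σ.SameCycle c x := (Perm.mem_toList_iff.1 (hcl ▸ hx)).1
    rw [Perm.mul_apply, Perm.inv_eq_iff_eq, hsame.cycleOf_apply]
  · rw [← hcl, Perm.formPerm_toList, mul_inv_cancel_left]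

lemma numOrbits_swap_mul (hab : a ≠ b) (ha : σ a = a) :
    numOrbits (swap a b * σ) + 1 = numOrbits σ := by
  obtain ⟨l, τ, hl, hτ, rfl⟩ := exists_eq_formPerm_mul σ b
  have hdisj := disjoint_formPerm hτ
  obtain ⟨hal, hτa⟩ : (b :: l).formPerm a = a ∧ τ a = a :=
    hdisj.mul_apply_eq_iff.1 ha
  have hanotin : a ∉ b :: l := fun hmem => by
    obtain _ | ⟨x, l⟩ := l
    · exact hab (List.mem_singleton.1 hmem)
    · exact (List.formPerm_apply_mem_ne_self_iff _ hl _ hmem).2 (by simp) hal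
  have hl' : (a :: b :: l).Nodup := List.nodup_cons.2 ⟨hanotin, hl⟩
  have hdisj' : Perm.Disjoint (a :: b :: l).formPerm τ :=
    disjoint_formPerm (List.forall_mem_cons.2 ⟨hτa, hτ⟩)
  have h := numOrbits_mul_of_disjoint hdisj
  have h' := numOrbits_mul_of_disjoint hdisj'
  have hf := numOrbits_formPerm hl
  have hf' := numOrbits_formPerm hl'
  rw [List.formPerm_cons_cons, mul_assoc] at h'
  rw [List.formPerm_cons_cons, List.length_cons] at hf'
  omega

lemma numOrbits_viaEmbeddingHom_mul_swap (σ : Perm (Fin (n + 1))) :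
    numOrbits (Perm.viaEmbeddingHom Fin.castSuccEmb σ *
      swap (Fin.last n).castSucc (Fin.last (n + 1))) = numOrbits σ := by
  set σ' := Perm.viaEmbeddingHom Fin.castSuccEmb σ
  set s := swap (Fin.last (n + 1)) (Fin.last n).castSucc with hs
  have hfix : σ' (Fin.last (n + 1)) = Fin.last (n + 1) :=
    Perm.viaEmbedding_apply_of_notMem σ Fin.castSuccEmb _
      fun ⟨x, hx⟩ => Fin.castSucc_ne_last x hx
  have hmerge := numOrbits_swap_mul (Fin.castSucc_ne_last (Fin.last n)).symm hfix
  have hconj := numOrbits_conj (s * σ') s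
  rw [← mul_assoc, hs, swap_mul_self, one_mul, swap_inv] at hconj
  rw [swap_comm, hconj]
  exact Nat.add_right_cancel (hmerge.trans (numOrbits_viaEmbeddingHom_castSucc σ))

lemma numOrbits_pos (σ : Perm (Fin (n + 1))) : 0 < numOrbits σ := by
  by_contra! h
  have hcycles : σ.cycleType.card = 0 := by
    rw [numOrbits] at h
    omega
  have hsum := numOrbits_add_sum_cycleType σ
  rw [Multiset.card_eq_zero.1 hcycles, Multiset.sum_zero] at hsum
  omega

end NumOrbits

-- Stabilizing the braid on no strands creates an orbit; every other move preserves their number.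
lemma max_one_numOrbits_eq_of_markov {x y : Σ n, UVB n} (h : Markov x y) :
    max 1 (numOrbits (permHom x.2)) = max 1 (numOrbits (permHom y.2)) := by
  induction h with
  | refl => rfl
  | symm _ _ _ ih => exact ih.symm
  | trans _ _ _ _ _ ih ih' => exact ih.trans ih'
  | rel x y h =>
    have hstab {n : ℕ} (α : UVB n) (g : UVB (n + 1)) (hg : permHom g = permHom (rho (n + 1) n)) :
        max 1 (numOrbits (permHom α)) = max 1 (numOrbits (permHom (incl n α * g))) := by
      rw [map_mul, permHom_incl, hg]
      obtain _ | n := n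
      · rw [Subsingleton.elim (permHom α) 1, Subsingleton.elim (α := Perm (Fin 1)) (_ * _) 1,
          numOrbits_one, numOrbits_one]
        rfl
      · rw [permHom_rho_last, numOrbits_viaEmbeddingHom_mul_swap]
    cases h with
    | conj n α γ => simp only [map_mul, map_inv, numOrbits_conj]
    | stabPos n α => exact hstab α _ (permHom_sigma_eq_permHom_rho _ _)
    | stabNeg n α => exact hstab α _ (by
        rw [map_inv, permHom_sigma_eq_permHom_rho, ← map_inv, rho_inv])
    | stabVirt n α => exact hstab α _ rfl

lemma numOrbits_permHom_eq_of_markov {α : UVB (n + 1)} {β : UVB (k + 1)}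
    (h : Markov ⟨n + 1, α⟩ ⟨k + 1, β⟩) : numOrbits (permHom α) = numOrbits (permHom β) := by
  have hmax := max_one_numOrbits_eq_of_markov h
  rwa [max_eq_right (numOrbits_pos _), max_eq_right (numOrbits_pos _)] at hmax

end UVB

/-! ## Statement 7 -/

/-- Every braid `α ∈ UVB n` (n ≥ 2) is fused Markov equivalent to a
pure braid `β ∈ UVP m`, where `m` is the number of orbits of ι(α) on {1,…,n}
(= the number of components of the closure of α). -/
theorem statement7 (ι : ∀ n, UVB n →* Equiv.Perm (Fin n)) (hι : ∀ n, IsIota n (ι n))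
    (n : ℕ) (hn : 2 ≤ n) (α : UVB n) :
    ∃ β : UVB (numOrbits (ι n α)),
      β ∈ (ι (numOrbits (ι n α))).ker ∧ Markov ⟨n, α⟩ ⟨numOrbits (ι n α), β⟩ := by
  obtain ⟨n, rfl⟩ := Nat.exists_eq_add_of_le' (one_le_two.trans hn)
  obtain ⟨k, β, hβ, hαβ⟩ := UVB.exists_markov_permHom_eq_one α
  have hk : k + 1 = numOrbits (ι (n + 1) α) := by
    rw [(hι (n + 1)).eq_permHom, UVB.numOrbits_permHom_eq_of_markov hαβ, hβ, UVB.numOrbits_one]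
  rw [← hk]
  exact ⟨β, by rw [(hι (k + 1)).eq_permHom]; exact hβ, hαβ⟩
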